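/- Let T > 0, α ∈ (1/2, 1), and let c_α ∈ (0, π/2] satisfy sin(2c_α)/(2c_α) = α². Let u : [0,1] × [0,T] → ℝ be a solution of u_t = u_{xx} + (1/x)u_x − sin(2u)/(2x²) on (0,1] × (0,T] with u(x,0) = u₀(x), u(0,t) = u(1,t) = 0 for t ∈ [0,T], such that the partial derivatives ∂ʲu/∂xʲ for 0 ≤ j ≤ 4 and ∂ʲu/∂tʲ for 0 ≤ j ≤ 2 exist and are bounded on [0,1] × [0,T], and assume sup_{x∈[0,1]} |u(x,0)| ≤ c_α. Then there exists a constant c > 0 such that for all N ≥ 1 and M ≥ 1, with h = 1/(N+1), Δt = T/M, grid points x_i = i·h, discrete initial data u⁰ = (u(x_1,0),…,u(x_N,0))ᵀ, uⁿ the iterates of the semi-implicit Euler scheme, and discretization error eⁿ := (u(x_1, nΔt),…,u(x_N, nΔt))ᵀ − uⁿ, one has ‖eⁿ‖_{D,h} ≤ c·(Δt + h²·|ln h|^{1/2}) for all 1 ≤ n ≤ M. -/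

import Mathlib

open Real Matrix

noncomputable section

/-- Mesh size `h = 1/(N+1)`. -/
def hmesh (N : ℕ) : ℝ := 1 / (N + 1)

/-- Grid points `x_i = i·h`, `i = 1,…,N` (here `i : Fin N` corresponds to `i+1`). -/
def gridx (N : ℕ) (i : Fin N) : ℝ := ((i : ℕ) + 1) * hmesh N

/-- `A = (1/h²)·tridiag(−1,2,−1)`. -/
def matA (N : ℕ) : Matrix (Fin N) (Fin N) ℝ := fun i j =>
  (1 / (hmesh N) ^ 2) *
    (if (i : ℕ) = (j : ℕ) then 2
     else if (i : ℕ) + 1 = (j : ℕ) ∨ (j : ℕ) + 1 = (i : ℕ) then -1 else 0)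

/-- `B = (1/(2h))·tridiag(−1,0,1)`. -/
def matB (N : ℕ) : Matrix (Fin N) (Fin N) ℝ := fun i j =>
  (1 / (2 * hmesh N)) *
    (if (i : ℕ) + 1 = (j : ℕ) then 1
     else if (j : ℕ) + 1 = (i : ℕ) then -1 else 0)

/-- `D = diag(x_1,…,x_N)`. -/
def matD (N : ℕ) : Matrix (Fin N) (Fin N) ℝ := Matrix.diagonal (gridx N)

/-- `D^β = diag(x_1^β,…,x_N^β)` (real powers). -/
def matDpow (N : ℕ) (β : ℝ) : Matrix (Fin N) (Fin N) ℝ :=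
  Matrix.diagonal (fun i => gridx N i ^ β)

/-- `C = A − D⁻¹B`. -/
def matC (N : ℕ) : Matrix (Fin N) (Fin N) ℝ :=
  matA N - Matrix.diagonal (fun i => (gridx N i)⁻¹) * matB N

/-- `g(y) = sin(2y)/(2y)` for `y ≠ 0`, `g(0) = 1`. -/
def gfun (y : ℝ) : ℝ := if y = 0 then 1 else Real.sin (2 * y) / (2 * y)

/-- `G(u) = diag(g(u_1),…,g(u_N))`. -/
def matG {N : ℕ} (u : Fin N → ℝ) : Matrix (Fin N) (Fin N) ℝ :=
  Matrix.diagonal (fun i => gfun (u i))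

/-- The matrix `I + Δt(C + G(v)D⁻²)` of the semi-implicit Euler scheme. -/
def stepMat (N : ℕ) (Δt : ℝ) (v : Fin N → ℝ) : Matrix (Fin N) (Fin N) ℝ :=
  1 + Δt • (matC N + matG v * matDpow N (-2))

/-- Operator norm of a matrix induced by the maximum norm on `ℝ^N`
(the Pi norm on `Fin N → ℝ` is the sup norm). -/
def opNormInf {N : ℕ} (M : Matrix (Fin N) (Fin N) ℝ) : ℝ :=
  ‖(LinearMap.toContinuousLinearMap (Matrix.mulVecLin M) :
      (Fin N → ℝ) →L[ℝ] (Fin N → ℝ))‖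

end

/-- Weighted discrete norm `‖v‖_{D,h} = (h Σ_i x_i v_i²)^{1/2}`. -/
noncomputable def normDh (N : ℕ) (v : Fin N → ℝ) : ℝ :=
  Real.sqrt (hmesh N * ∑ i, gridx N i * v i ^ 2)

/-!
Multiplied by `x`, the operator `C` is in divergence form, so it is nonnegative for the weighted
inner product, and it satisfies a discrete maximum principle. The latter keeps the iterates below
`max |u(·, 0)| < π / 2`, where `g` is bounded below by some `a > 0`. Hence the reaction term
`G(uⁿ) D⁻²` is coercive, and it absorbs residuals which are as singular as `D⁻¹`. Since `u` vanishes
at `x = 0`, Taylor expansion shows that the residual of the scheme is `D⁻¹` times a vector of size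
`|eⁿ| + Δt + h²`, and the discrete Grönwall inequality finishes the proof. This gives the rate
`Δt + h²` without the logarithm.
-/

section Taylor

variable {E : Type*} [NormedAddCommGroup E] [NormedSpace ℝ E] {f : ℝ → E} {a b K x y h : ℝ} {n : ℕ}

theorem norm_sub_taylorWithinEval_le (hf : ContDiffOn ℝ (n + 1) f (Set.Icc a b))
    (hK : ∀ t ∈ Set.Icc a b, ‖iteratedDerivWithin (n + 1) f (Set.Icc a b) t‖ ≤ K)
    (hx : x ∈ Set.Icc a b) (hy : y ∈ Set.Icc a b) :
    ‖f y - taylorWithinEval f n (Set.Icc a b) x y‖ ≤ K * |y - x| ^ (n + 1) / n.factorial := by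
  rcases eq_or_ne x y with rfl | hxy
  · simp
  have hab : a < b := by
    rcases hxy.lt_or_gt with h | h
    · exact hx.1.trans_lt (h.trans_le hy.2)
    · exact hy.1.trans_lt (h.trans_le hx.2)
  have hsub : Set.uIcc x y ⊆ Set.Icc a b := Set.uIcc_subset_Icc hx hy
  have hdiff : DifferentiableOn ℝ (iteratedDerivWithin n f (Set.Icc a b)) (Set.Icc a b) :=
    hf.differentiableOn_iteratedDerivWithin (mod_cast n.lt_succ_self) (uniqueDiffOn_Icc hab)
  -- The Taylor polynomial is differentiated in its base point, where only one term survives.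
  have hderiv : ∀ t ∈ Set.uIcc x y,
      HasDerivWithinAt (fun t => taylorWithinEval f n (Set.Icc a b) t y)
        (((n.factorial : ℝ)⁻¹ * (y - t) ^ n) • iteratedDerivWithin (n + 1) f (Set.Icc a b) t)
        (Set.uIcc x y) t := fun t ht =>
    (hasDerivWithinAt_taylorWithinEval_at_Icc y hab (hsub ht) hf.of_succ hdiff).mono hsub
  have hbound : ∀ t ∈ Set.uIcc x y,
      ‖((n.factorial : ℝ)⁻¹ * (y - t) ^ n) • iteratedDerivWithin (n + 1) f (Set.Icc a b) t‖ ≤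
        (n.factorial : ℝ)⁻¹ * |y - x| ^ n * K := fun t ht => by
    rw [norm_smul, norm_mul, norm_pow, Real.norm_of_nonneg (by positivity), Real.norm_eq_abs]
    have := Set.abs_sub_right_of_mem_uIcc ht
    gcongr
    exact hK t (hsub ht)
  have hmvt := (convex_uIcc x y).norm_image_sub_le_of_norm_hasDerivWithin_le hderiv hbound
    Set.left_mem_uIcc Set.right_mem_uIcc
  rw [taylorWithinEval_self, Real.norm_eq_abs] at hmvt
  exact hmvt.trans_eq (by ring)

theorem norm_second_difference_sub_le (hf : ContDiffOn ℝ 4 f (Set.Icc a b))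
    (hK : ∀ t ∈ Set.Icc a b, ‖iteratedDerivWithin 4 f (Set.Icc a b) t‖ ≤ K)
    (hl : x - h ∈ Set.Icc a b) (hr : x + h ∈ Set.Icc a b) :
    ‖f (x + h) + f (x - h) - (2 : ℝ) • f x - h ^ 2 • iteratedDerivWithin 2 f (Set.Icc a b) x‖ ≤
      K * h ^ 4 / 3 := by
  have hx : x ∈ Set.Icc a b := ⟨by linarith [hl.1, hr.1], by linarith [hl.2, hr.2]⟩
  have hf' : ContDiffOn ℝ ((3 : ℕ) + 1) f (Set.Icc a b) := hf.of_le (by norm_num)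
  have hleft := norm_sub_taylorWithinEval_le hf' hK hx hl
  have hright := norm_sub_taylorWithinEval_le hf' hK hx hr
  rw [sub_sub_cancel_left, abs_neg] at hleft
  rw [add_sub_cancel_left] at hright
  have hcancel : taylorWithinEval f 3 (Set.Icc a b) x (x + h)
      + taylorWithinEval f 3 (Set.Icc a b) x (x - h) =
        (2 : ℝ) • f x + h ^ 2 • iteratedDerivWithin 2 f (Set.Icc a b) x := by
    simp only [taylor_within_apply, Finset.sum_range_succ, Finset.sum_range_zero, Nat.factorial,
      iteratedDerivWithin_zero, sub_sub_cancel_left, add_sub_cancel_left]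
    push_cast
    module
  rw [sub_sub, ← hcancel, add_sub_add_comm]
  refine (norm_add_le_of_le hright hleft).trans_eq ?_
  rw [show |h| ^ (3 + 1) = h ^ 4 from Even.pow_abs (by decide) h]
  norm_num [Nat.factorial]
  ring

theorem norm_central_difference_sub_le (hf : ContDiffOn ℝ 3 f (Set.Icc a b))
    (hK : ∀ t ∈ Set.Icc a b, ‖iteratedDerivWithin 3 f (Set.Icc a b) t‖ ≤ K)
    (hl : x - h ∈ Set.Icc a b) (hr : x + h ∈ Set.Icc a b) :
    ‖f (x + h) - f (x - h) - (2 * h) • derivWithin f (Set.Icc a b) x‖ ≤ K * |h| ^ 3 := by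
  have hx : x ∈ Set.Icc a b := ⟨by linarith [hl.1, hr.1], by linarith [hl.2, hr.2]⟩
  have hf' : ContDiffOn ℝ ((2 : ℕ) + 1) f (Set.Icc a b) := hf.of_le (by norm_num)
  have hleft := norm_sub_taylorWithinEval_le hf' hK hx hl
  have hright := norm_sub_taylorWithinEval_le hf' hK hx hr
  rw [sub_sub_cancel_left, abs_neg] at hleft
  rw [add_sub_cancel_left] at hright
  have hcancel : taylorWithinEval f 2 (Set.Icc a b) x (x + h)
      - taylorWithinEval f 2 (Set.Icc a b) x (x - h) =
        (2 * h) • derivWithin f (Set.Icc a b) x := by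
    simp only [taylor_within_apply, Finset.sum_range_succ, Finset.sum_range_zero, Nat.factorial,
      iteratedDerivWithin_zero, iteratedDerivWithin_one, sub_sub_cancel_left, add_sub_cancel_left]
    push_cast
    module
  rw [← hcancel, sub_sub_sub_comm]
  refine (norm_sub_le_of_le hright hleft).trans_eq ?_
  norm_num [Nat.factorial]

end Taylor

theorem sinc_eq_integral_cos (x : ℝ) : sinc x = ∫ s in (0 : ℝ)..1, cos (x * s) := by
  rcases eq_or_ne x 0 with rfl | hx
  · simp
  · rw [intervalIntegral.integral_comp_mul_left cos hx, sinc_of_ne_zero hx]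
    simp [div_eq_inv_mul]

theorem lipschitzWith_sinc : LipschitzWith 1 sinc := by
  refine LipschitzWith.of_dist_le_mul fun x y => ?_
  rw [NNReal.coe_one, one_mul, dist_eq_norm, sinc_eq_integral_cos, sinc_eq_integral_cos,
    ← intervalIntegral.integral_sub (Continuous.intervalIntegrable (by fun_prop) _ _)
      (Continuous.intervalIntegrable (by fun_prop) _ _)]
  have hbound : ∀ s ∈ Set.uIoc (0 : ℝ) 1, ‖cos (x * s) - cos (y * s)‖ ≤ dist x y := fun s hs => by
    rw [Set.uIoc_of_le zero_le_one] at hs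
    calc ‖cos (x * s) - cos (y * s)‖ ≤ |x * s - y * s| := abs_cos_sub_cos_le _ _
      _ = dist x y * s := by rw [← sub_mul, abs_mul, abs_of_pos hs.1, Real.dist_eq]
      _ ≤ dist x y := mul_le_of_le_one_right dist_nonneg hs.2
  simpa using intervalIntegral.norm_integral_le_of_norm_le_const hbound

theorem antitoneOn_sinc : AntitoneOn sinc (Set.Icc 0 π) := by
  intro x hx y hy hxy
  rcases hx.1.eq_or_lt with rfl | hx0
  · simpa using sinc_le_one y
  rw [sinc_of_ne_zero hx0.ne', sinc_of_ne_zero (hx0.trans_le hxy).ne']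
  have h := strictConcaveOn_sin_Icc.concaveOn.slope_anti (Set.left_mem_Icc.2 pi_pos.le)
    ⟨hx, hx0.ne'⟩ ⟨hy, (hx0.trans_le hxy).ne'⟩ hxy
  simpa [slope_def_field] using h

theorem gfun_eq_sinc (y : ℝ) : gfun y = sinc (2 * y) := by
  simp [gfun, sinc_apply]

theorem gfun_mul_self (y : ℝ) : gfun y * y = sin (2 * y) / 2 := by
  rcases eq_or_ne y 0 with rfl | hy
  · simp
  · rw [gfun, if_neg hy]
    field_simp

theorem abs_gfun_sub_gfun_le (y z : ℝ) : |gfun y - gfun z| ≤ 2 * |y - z| := by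
  have h := lipschitzWith_sinc.dist_le_mul (2 * y) (2 * z)
  rwa [NNReal.coe_one, one_mul, Real.dist_eq, Real.dist_eq, ← mul_sub, abs_mul, abs_two,
    ← gfun_eq_sinc, ← gfun_eq_sinc] at h

theorem sinc_le_gfun_of_abs_le {c y : ℝ} (hc : c ≤ π / 2) (hy : |y| ≤ c) :
    sinc (2 * c) ≤ gfun y := by
  have heven : sinc (2 * y) = sinc (2 * |y|) := by
    rcases abs_choice y with h | h <;> simp [h]
  have hy0 := abs_nonneg y
  rw [gfun_eq_sinc, heven]
  exact antitoneOn_sinc ⟨by linarith, by linarith⟩ ⟨by linarith, by linarith⟩ (by linarith)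

theorem sinc_two_mul_pos {c : ℝ} (hc0 : 0 ≤ c) (hc : c < π / 2) : 0 < sinc (2 * c) := by
  rcases hc0.eq_or_lt with rfl | hpos
  · simp
  · rw [sinc_of_ne_zero (by positivity)]
    exact div_pos (sin_pos_of_pos_of_lt_pi (by positivity) (by linarith)) (by positivity)

theorem sum_range_mul_sub_eq {R : Type*} [CommRing R] (V F : ℕ → R) (n : ℕ) :
    ∑ k ∈ Finset.range n, V (k + 1) * (F k - F (k + 1)) =
      ∑ k ∈ Finset.range (n + 1), F k * (V (k + 1) - V k) + V 0 * F 0 - V (n + 1) * F n := by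
  induction n with
  | zero => simp; ring
  | succ n ih =>
    rw [Finset.sum_range_succ, ih, Finset.sum_range_succ _ (n + 1)]
    ring

theorem le_add_mul_exp_of_step_le {y : ℕ → ℝ} {q b : ℝ} {n : ℕ} (hy : ∀ k, 0 ≤ y k) (hq : 0 ≤ q)
    (hb : 0 ≤ b) (hstep : ∀ k < n, y (k + 1) ≤ (1 + q) * y k + b) :
    y n ≤ (y 0 + n * b) * exp (n * q) := by
  -- Freezing the sequence at `n` extends the recursion to all indices.
  have hfrozen : ∀ k ≥ 0, y (min (k + 1) n) ≤ (1 + q) * y (min k n) + b := fun k _ => by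
    rcases lt_or_ge k n with hk | hk
    · rw [min_eq_left hk, min_eq_left hk.le]
      exact hstep k hk
    · rw [min_eq_right hk, min_eq_right (hk.trans k.le_succ)]
      nlinarith [mul_nonneg hq (hy n)]
  have h := discrete_gronwall (u := fun k => y (min k n)) (hy _) hfrozen (fun _ _ => hq)
    (fun _ _ => hb) n.zero_le
  simpa using h

theorem natCast_mul_div_mem_Icc {L : ℝ} {k m : ℕ} (hL : 0 ≤ L) (hk : k ≤ m) :
    (k : ℝ) * (L / m) ∈ Set.Icc 0 L := by
  refine ⟨by positivity, ?_⟩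
  rw [mul_div_left_comm]
  exact mul_le_of_le_one_right hL (div_le_one_of_le₀ (mod_cast hk) m.cast_nonneg)

section Grid

variable {N : ℕ}

theorem hmesh_pos (N : ℕ) : 0 < hmesh N := one_div_pos.2 N.cast_add_one_pos

theorem gridx_pos (N : ℕ) (i : Fin N) : 0 < gridx N i :=
  mul_pos (by positivity) (hmesh_pos N)

theorem natCast_mul_hmesh_mem_Icc {k : ℕ} (hk : k ≤ N + 1) :
    (k : ℝ) * hmesh N ∈ Set.Icc (0 : ℝ) 1 := by
  simpa [hmesh] using natCast_mul_div_mem_Icc zero_le_one hk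

theorem gridx_mem_Icc (N : ℕ) (i : Fin N) : gridx N i ∈ Set.Icc (0 : ℝ) 1 := by
  have h := natCast_mul_hmesh_mem_Icc (N := N) (k := i + 1) (by omega)
  rwa [Nat.cast_succ] at h

theorem hmesh_mul_sum_gridx_le_one (N : ℕ) : hmesh N * ∑ i, gridx N i ≤ 1 := by
  have hsum : ∑ i, gridx N i ≤ N := by
    simpa using Finset.sum_le_sum fun i (_ : i ∈ Finset.univ) => (gridx_mem_Icc N i).2
  calc hmesh N * ∑ i, gridx N i ≤ hmesh N * N :=
        mul_le_mul_of_nonneg_left hsum (hmesh_pos N).le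
    _ = N * hmesh N := mul_comm _ _
    _ ≤ 1 := (natCast_mul_hmesh_mem_Icc N.le_succ).2

theorem one_half_le_sqrt_abs_log_hmesh (hN : 1 ≤ N) : 1 / 2 ≤ √|log (hmesh N)| := by
  have hN' : (2 : ℝ) ≤ N + 1 := by exact_mod_cast Nat.succ_le_succ hN
  have hlog : log 2 ≤ |log (hmesh N)| := by
    rw [hmesh, one_div, log_inv, abs_neg]
    exact (log_le_log two_pos hN').trans (le_abs_self _)
  refine le_sqrt_of_sq_le ?_
  linarith [log_two_gt_d9]

/-- The extension by zero of the grid function `v` to all of `ℕ`, with the value at `x_k` placed at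
the index `k`. It is written as a sum so that rows of tridiagonal matrices expand termwise. -/
def zeroExt (v : Fin N → ℝ) (k : ℕ) : ℝ :=
  ∑ j : Fin N, if (j : ℕ) + 1 = k then v j else 0

theorem zeroExt_succ (v : Fin N → ℝ) (i : Fin N) : zeroExt v (i + 1) = v i := by
  simp [zeroExt, ← Fin.ext_iff]

theorem zeroExt_zero (v : Fin N → ℝ) : zeroExt v 0 = 0 := by
  simp [zeroExt]

theorem zeroExt_last (v : Fin N → ℝ) : zeroExt v (N + 1) = 0 :=
  Finset.sum_eq_zero fun j _ => if_neg (by omega)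

theorem abs_zeroExt_le {v : Fin N → ℝ} {m : ℝ} (hm : 0 ≤ m) (hv : ∀ i, |v i| ≤ m) (k : ℕ) :
    |zeroExt v k| ≤ m := by
  by_cases h : ∃ i : Fin N, (i : ℕ) + 1 = k
  · obtain ⟨i, rfl⟩ := h
    rw [zeroExt_succ]
    exact hv i
  · push Not at h
    rwa [zeroExt, Finset.sum_eq_zero fun j _ => if_neg (h j), abs_zero]

theorem zeroExt_restrict {f : ℝ → ℝ} (h0 : f 0 = 0) (h1 : f 1 = 0) {k : ℕ} (hk : k ≤ N + 1) :
    zeroExt (fun i : Fin N => f (gridx N i)) k = f (k * hmesh N) := by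
  rcases k with _ | k
  · simp [zeroExt_zero, h0]
  · rcases hk.eq_or_lt with hlast | hlt
    · rw [hlast, zeroExt_last, hmesh, Nat.cast_succ, mul_one_div_cancel (by positivity), h1]
    · have h := zeroExt_succ (fun i : Fin N => f (gridx N i)) ⟨k, by omega⟩
      rw [h, gridx, Nat.cast_succ]

theorem matA_mulVec_apply (v : Fin N → ℝ) (i : Fin N) :
    (matA N *ᵥ v) i =
      (2 * zeroExt v (i + 1) - zeroExt v i - zeroExt v (i + 2)) / hmesh N ^ 2 := by
  simp only [zeroExt, Matrix.mulVec, dotProduct, matA, Finset.mul_sum, ← Finset.sum_sub_distrib,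
    Finset.sum_div]
  refine Finset.sum_congr rfl fun j _ => ?_
  split_ifs <;> first | omega | ring

theorem matB_mulVec_apply (v : Fin N → ℝ) (i : Fin N) :
    (matB N *ᵥ v) i = (zeroExt v (i + 2) - zeroExt v i) / (2 * hmesh N) := by
  simp only [zeroExt, Matrix.mulVec, dotProduct, matB, ← Finset.sum_sub_distrib, Finset.sum_div]
  refine Finset.sum_congr rfl fun j _ => ?_
  split_ifs <;> first | omega | ring

theorem matC_mulVec_apply (v : Fin N → ℝ) (i : Fin N) :
    (matC N *ᵥ v) i =
      (2 * zeroExt v (i + 1) - zeroExt v i - zeroExt v (i + 2)) / hmesh N ^ 2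
        - (gridx N i)⁻¹ * ((zeroExt v (i + 2) - zeroExt v i) / (2 * hmesh N)) := by
  rw [matC, Matrix.sub_mulVec, Pi.sub_apply, ← Matrix.mulVec_mulVec, Matrix.mulVec_diagonal,
    matA_mulVec_apply, matB_mulVec_apply]

theorem stepMat_mulVec_apply (dt : ℝ) (w v : Fin N → ℝ) (i : Fin N) :
    (stepMat N dt w *ᵥ v) i =
      v i + dt * ((matC N *ᵥ v) i + gfun (w i) * v i / gridx N i ^ 2) := by
  simp only [stepMat, matG, matDpow, Matrix.add_mulVec, Matrix.one_mulVec, Matrix.smul_mulVec,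
    Matrix.diagonal_mul_diagonal, Matrix.mulVec_diagonal, Pi.add_apply, Pi.smul_apply,
    smul_eq_mul]
  rw [rpow_neg (gridx_pos N i).le, rpow_two]
  ring

/-- The discrete flux `x v'` across the midpoint of `[x_k, x_{k+1}]`, where `v` extended by zero
plays the role of the function. -/
noncomputable def flux (v : Fin N → ℝ) (k : ℕ) : ℝ :=
  ((k : ℝ) + 1 / 2) * (zeroExt v (k + 1) - zeroExt v k)

theorem gridx_mul_matC_mulVec_apply (v : Fin N → ℝ) (i : Fin N) :
    gridx N i * (matC N *ᵥ v) i = (flux v i - flux v (i + 1)) / hmesh N := by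
  have hh := hmesh_pos N
  rw [matC_mulVec_apply, flux, flux, gridx]
  push_cast
  field_simp
  ring

theorem sum_gridx_mul_matC_mulVec_nonneg (v : Fin N → ℝ) :
    0 ≤ ∑ i, gridx N i * (matC N *ᵥ v) i * v i := by
  have hparts : ∑ i, gridx N i * (matC N *ᵥ v) i * v i =
      (∑ k ∈ Finset.range (N + 1), flux v k * (zeroExt v (k + 1) - zeroExt v k)) / hmesh N := by
    have h := sum_range_mul_sub_eq (zeroExt v) (flux v) N
    rw [zeroExt_zero, zeroExt_last, zero_mul, zero_mul, add_zero, sub_zero] at h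
    rw [← h, ← Fin.sum_univ_eq_sum_range fun k => zeroExt v (k + 1) * (flux v k - flux v (k + 1)),
      Finset.sum_div]
    refine Finset.sum_congr rfl fun i _ => ?_
    rw [gridx_mul_matC_mulVec_apply, zeroExt_succ]
    ring
  rw [hparts]
  refine div_nonneg (Finset.sum_nonneg fun k _ => ?_) (hmesh_pos N).le
  rw [flux, mul_assoc]
  exact mul_nonneg (by positivity) (mul_self_nonneg _)

theorem matC_mulVec_apply_mul_nonneg_of_abs_le {v : Fin N → ℝ} {i : Fin N}
    (hmax : ∀ j, |v j| ≤ |v i|) : 0 ≤ (matC N *ᵥ v) i * v i := by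
  have hneighbour : ∀ k, zeroExt v k * v i ≤ v i * v i := fun k =>
    calc zeroExt v k * v i ≤ |zeroExt v k| * |v i| := (le_abs_self _).trans_eq (abs_mul _ _)
      _ ≤ |v i| * |v i| :=
          mul_le_mul_of_nonneg_right (abs_zeroExt_le (abs_nonneg _) hmax k) (abs_nonneg _)
      _ = v i * v i := abs_mul_abs_self _
  have hleft := mul_le_mul_of_nonneg_left (hneighbour i) (by positivity : 0 ≤ (i : ℝ) + 1 / 2)
  have hright := mul_le_mul_of_nonneg_left (hneighbour (i + 2))
    (by positivity : 0 ≤ (i : ℝ) + 1 + 1 / 2)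
  have hflux : 0 ≤ gridx N i * ((matC N *ᵥ v) i * v i) := by
    rw [← mul_assoc, gridx_mul_matC_mulVec_apply, div_mul_eq_mul_div]
    refine div_nonneg ?_ (hmesh_pos N).le
    rw [flux, flux, zeroExt_succ]
    push_cast
    linarith
  exact nonneg_of_mul_nonneg_right hflux (gridx_pos N i)

theorem abs_le_of_abs_stepMat_mulVec_le {dt m : ℝ} (hdt : 0 ≤ dt) {w v : Fin N → ℝ}
    (hg : ∀ i, 0 ≤ gfun (w i)) (hm : ∀ i, |(stepMat N dt w *ᵥ v) i| ≤ m) (i : Fin N) :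
    |v i| ≤ m := by
  obtain ⟨k, -, hk⟩ := Finset.exists_max_image Finset.univ (fun j => |v j|) ⟨i, by simp⟩
  refine (hk i (Finset.mem_univ _)).trans ?_
  rcases eq_or_ne (v k) 0 with hzero | hne
  · rw [hzero, abs_zero]
    exact (abs_nonneg _).trans (hm k)
  have hC : 0 ≤ (matC N *ᵥ v) k * v k :=
    matC_mulVec_apply_mul_nonneg_of_abs_le fun j => hk j (Finset.mem_univ _)
  have hG : 0 ≤ gfun (w k) * v k ^ 2 / gridx N k ^ 2 := by
    have := hg k
    positivity
  have hstep : v k * v k ≤ (stepMat N dt w *ᵥ v) k * v k := by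
    rw [stepMat_mulVec_apply]
    have := mul_nonneg hdt (add_nonneg hC hG)
    linear_combination this
  refine le_of_mul_le_mul_right ?_ (abs_pos.2 hne)
  calc |v k| * |v k| = v k * v k := abs_mul_abs_self _
    _ ≤ |(stepMat N dt w *ᵥ v) k| * |v k| := by
        rw [← abs_mul]
        exact hstep.trans (le_abs_self _)
    _ ≤ m * |v k| := mul_le_mul_of_nonneg_right (hm k) (abs_nonneg _)

theorem abs_le_of_forall_stepMat_mulVec_eq {dt c : ℝ} (hdt : 0 ≤ dt) (hc : c ≤ π / 2)
    (hsinc : 0 ≤ sinc (2 * c)) {v : ℕ → Fin N → ℝ} (hinit : ∀ i, |v 0 i| ≤ c)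
    (hv : ∀ n, stepMat N dt (v n) *ᵥ v (n + 1) = v n) (n : ℕ) (i : Fin N) : |v n i| ≤ c := by
  induction n generalizing i with
  | zero => exact hinit i
  | succ n ih =>
    refine abs_le_of_abs_stepMat_mulVec_le hdt (w := v n) (fun j => ?_) (fun j => ?_) i
    · exact hsinc.trans (sinc_le_gfun_of_abs_le hc (ih j))
    · rw [hv]
      exact ih j

theorem normDh_sq (v : Fin N → ℝ) : normDh N v ^ 2 = hmesh N * ∑ i, gridx N i * v i ^ 2 :=
  sq_sqrt (mul_nonneg (hmesh_pos N).le
    (Finset.sum_nonneg fun i _ => mul_nonneg (gridx_pos N i).le (sq_nonneg _)))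

theorem normDh_sq_le_of_abs_le {P S : ℝ} {r e : Fin N → ℝ} (h : ∀ i, |r i| ≤ P * |e i| + S) :
    normDh N r ^ 2 ≤ 2 * (P ^ 2 * normDh N e ^ 2 + S ^ 2) := by
  have hpoint : ∀ i, gridx N i * r i ^ 2 ≤
      2 * P ^ 2 * (gridx N i * e i ^ 2) + 2 * S ^ 2 * gridx N i := fun i => by
    have hsq : r i ^ 2 ≤ 2 * ((P * |e i|) ^ 2 + S ^ 2) :=
      calc r i ^ 2 = |r i| ^ 2 := (sq_abs _).symm
        _ ≤ (P * |e i| + S) ^ 2 := pow_le_pow_left₀ (abs_nonneg _) (h i) 2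
        _ ≤ 2 * ((P * |e i|) ^ 2 + S ^ 2) := add_sq_le
    rw [mul_pow, sq_abs] at hsq
    linear_combination mul_le_mul_of_nonneg_left hsq (gridx_pos N i).le
  have hsum := mul_le_mul_of_nonneg_left (Finset.sum_le_sum fun i (_ : i ∈ Finset.univ) => hpoint i)
    (hmesh_pos N).le
  rw [Finset.sum_add_distrib, ← Finset.mul_sum, ← Finset.mul_sum] at hsum
  have hone := mul_le_mul_of_nonneg_left (hmesh_mul_sum_gridx_le_one N)
    (by positivity : 0 ≤ 2 * S ^ 2)
  rw [normDh_sq, normDh_sq]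
  linear_combination hsum + hone

/-- The `D⁻¹` in the residual is the strongest singularity the reaction term can absorb. -/
theorem normDh_sq_le_of_stepMat_mulVec_eq {dt a : ℝ} (hdt : 0 ≤ dt) (ha : 0 < a)
    {w e' e r : Fin N → ℝ} (hw : ∀ i, a ≤ gfun (w i))
    (h : ∀ i, (stepMat N dt w *ᵥ e') i = e i + dt * (r i / gridx N i)) :
    normDh N e' ^ 2 ≤ normDh N e ^ 2 + dt / (2 * a) * normDh N r ^ 2 := by
  have hpoint : ∀ i, gridx N i * e' i ^ 2 + 2 * dt * (gridx N i * (matC N *ᵥ e') i * e' i) ≤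
      gridx N i * e i ^ 2 + dt / (2 * a) * (gridx N i * r i ^ 2) := fun i => by
    have hx := gridx_pos N i
    have htest : gridx N i * e' i ^ 2 + dt * (gridx N i * (matC N *ᵥ e') i * e' i) =
        gridx N i * (e i * e' i) + dt * (r i * e' i - gfun (w i) * e' i ^ 2 / gridx N i) := by
      have hi := h i
      rw [stepMat_mulVec_apply] at hi
      field_simp at hi ⊢
      linear_combination e' i * hi
    have hyoung : r i * e' i - a * e' i ^ 2 / gridx N i ≤ gridx N i * r i ^ 2 / (4 * a) := by
      rw [sub_le_iff_le_add, div_add_div _ _ (by positivity) hx.ne', le_div_iff₀ (by positivity)]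
      linear_combination sq_nonneg (gridx N i * r i - 2 * a * e' i)
    have hcoercive : a * e' i ^ 2 / gridx N i ≤ gfun (w i) * e' i ^ 2 / gridx N i := by
      have := hw i
      gcongr
    have hreaction : dt * (r i * e' i - gfun (w i) * e' i ^ 2 / gridx N i) ≤
        dt * (gridx N i * r i ^ 2 / (4 * a)) :=
      mul_le_mul_of_nonneg_left (by linarith) hdt
    have hcross := mul_le_mul_of_nonneg_left (two_mul_le_add_sq (e i) (e' i)) hx.le
    linear_combination 2 * htest + 2 * hreaction + hcross
  have hsum := Finset.sum_le_sum fun i (_ : i ∈ Finset.univ) => hpoint i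
  simp only [Finset.sum_add_distrib, ← Finset.mul_sum] at hsum
  have hdissipation := mul_nonneg hdt (sum_gridx_mul_matC_mulVec_nonneg e')
  have hscaled := mul_le_mul_of_nonneg_left
    (by linarith : ∑ i, gridx N i * e' i ^ 2 ≤ ∑ i, gridx N i * e i ^ 2
      + dt / (2 * a) * ∑ i, gridx N i * r i ^ 2) (hmesh_pos N).le
  rw [normDh_sq, normDh_sq, normDh_sq]
  linear_combination hscaled

theorem abs_gridx_mul_matC_mulVec_add_le {f : ℝ → ℝ} {K : ℝ} (h0 : f 0 = 0) (h1 : f 1 = 0)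
    (hf : ContDiffOn ℝ 4 f (Set.Icc 0 1))
    (hK₃ : ∀ x ∈ Set.Icc (0 : ℝ) 1, |iteratedDerivWithin 3 f (Set.Icc 0 1) x| ≤ K)
    (hK₄ : ∀ x ∈ Set.Icc (0 : ℝ) 1, |iteratedDerivWithin 4 f (Set.Icc 0 1) x| ≤ K) (i : Fin N) :
    |gridx N i * ((matC N *ᵥ fun j => f (gridx N j)) i
      + iteratedDerivWithin 2 f (Set.Icc 0 1) (gridx N i)
      + 1 / gridx N i * derivWithin f (Set.Icc 0 1) (gridx N i))| ≤ K * hmesh N ^ 2 := by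
  have hh := hmesh_pos N
  have hx := gridx_pos N i
  have hleft : ((i : ℕ) : ℝ) * hmesh N = gridx N i - hmesh N := by rw [gridx]; ring
  have hright : ((i + 2 : ℕ) : ℝ) * hmesh N = gridx N i + hmesh N := by
    rw [gridx]; push_cast; ring
  have hl := natCast_mul_hmesh_mem_Icc (N := N) (k := i) (by omega)
  have hr := natCast_mul_hmesh_mem_Icc (N := N) (k := i + 2) (by omega)
  rw [matC_mulVec_apply, zeroExt_succ, zeroExt_restrict h0 h1 (by omega),
    zeroExt_restrict h0 h1 (by omega)]
  rw [hleft] at hl ⊢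
  rw [hright] at hr ⊢
  have hsecond := norm_second_difference_sub_le hf hK₄ hl hr
  have hcentral := norm_central_difference_sub_le (hf.of_le (by norm_num)) hK₃ hl hr
  rw [abs_of_pos hh] at hcentral
  simp only [smul_eq_mul, norm_eq_abs] at hsecond hcentral
  set δ₂ := f (gridx N i + hmesh N) + f (gridx N i - hmesh N) - 2 * f (gridx N i)
    - hmesh N ^ 2 * iteratedDerivWithin 2 f (Set.Icc 0 1) (gridx N i) with hδ₂
  set δ₁ := f (gridx N i + hmesh N) - f (gridx N i - hmesh N)
    - 2 * hmesh N * derivWithin f (Set.Icc 0 1) (gridx N i) with hδ₁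
  calc _ = |-(gridx N i * δ₂ / hmesh N ^ 2) - δ₁ / (2 * hmesh N)| := by
        congr 1
        rw [hδ₁, hδ₂]
        field_simp
        ring
    _ ≤ gridx N i * |δ₂| / hmesh N ^ 2 + |δ₁| / (2 * hmesh N) := by
        refine (abs_sub _ _).trans_eq ?_
        rw [abs_neg, abs_div, abs_div, abs_mul, abs_of_pos hx, abs_of_pos (pow_pos hh 2),
          abs_of_pos (mul_pos two_pos hh)]
    _ ≤ 1 * (K * hmesh N ^ 4 / 3) / hmesh N ^ 2 + K * hmesh N ^ 3 / (2 * hmesh N) := by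
        have := (gridx_mem_Icc N i).2
        gcongr
    _ = 5 / 6 * (K * hmesh N ^ 2) := by
        field_simp
        ring
    _ ≤ K * hmesh N ^ 2 := by
        have hK : 0 ≤ K := (abs_nonneg _).trans (hK₃ _ (gridx_mem_Icc N i))
        have : 0 ≤ K * hmesh N ^ 2 := by positivity
        linarith

end Grid

/-- `u` is a solution on `[0, 1] × [0, T]` of the radially symmetric harmonic map heat flow equation
with homogeneous Dirichlet conditions, whose derivatives up to order four in space and two in time
are bounded by `K`. Derivatives at the boundary of the rectangle are one-sided. -/
structure IsSmoothSolution (T K : ℝ) (u : ℝ → ℝ → ℝ) : Prop where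
  boundary : ∀ t ∈ Set.Icc (0 : ℝ) T, u 0 t = 0 ∧ u 1 t = 0
  contDiffOn_space : ∀ t ∈ Set.Icc (0 : ℝ) T, ContDiffOn ℝ 4 (fun x => u x t) (Set.Icc 0 1)
  contDiffOn_time : ∀ x ∈ Set.Icc (0 : ℝ) 1, ContDiffOn ℝ 2 (fun t => u x t) (Set.Icc 0 T)
  bound : ∀ x ∈ Set.Icc (0 : ℝ) 1, ∀ t ∈ Set.Icc (0 : ℝ) T,
    (∀ j ≤ 4, |iteratedDerivWithin j (fun x' => u x' t) (Set.Icc 0 1) x| ≤ K) ∧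
    (∀ j ≤ 2, |iteratedDerivWithin j (fun t' => u x t') (Set.Icc 0 T) t| ≤ K)
  equation : ∀ x ∈ Set.Ioc (0 : ℝ) 1, ∀ t ∈ Set.Ioc (0 : ℝ) T,
    derivWithin (fun t' => u x t') (Set.Icc 0 T) t =
      iteratedDerivWithin 2 (fun x' => u x' t) (Set.Icc 0 1) x
        + (1 / x) * derivWithin (fun x' => u x' t) (Set.Icc 0 1) x
        - sin (2 * u x t) / (2 * x ^ 2)

namespace IsSmoothSolution

variable {T K t dt x : ℝ} {u : ℝ → ℝ → ℝ} {N M n : ℕ}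

theorem bound_nonneg (hu : IsSmoothSolution T K u) (ht : t ∈ Set.Icc 0 T) : 0 ≤ K :=
  (abs_nonneg _).trans ((hu.bound 0 ⟨le_rfl, zero_le_one⟩ t ht).1 0 (by norm_num))

theorem abs_div_le (hu : IsSmoothSolution T K u) (ht : t ∈ Set.Icc 0 T) (hx : x ∈ Set.Ioc 0 1) :
    |u x t / x| ≤ K := by
  have h := norm_sub_taylorWithinEval_le (n := 0) (x := 0)
    ((hu.contDiffOn_space t ht).of_le (by norm_num))
    (fun y hy => (hu.bound y hy t ht).1 1 (by norm_num)) ⟨le_rfl, zero_le_one⟩ ⟨hx.1.le, hx.2⟩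
  rw [abs_div, abs_of_pos hx.1, div_le_iff₀ hx.1]
  simpa [(hu.boundary t ht).1, abs_of_pos hx.1] using h

theorem abs_sub_le (hu : IsSmoothSolution T K u) (ht : t ∈ Set.Icc 0 T)
    (hdt : 0 ≤ dt) (ht' : t + dt ∈ Set.Icc 0 T) (hx : x ∈ Set.Icc 0 1) :
    |u x t - u x (t + dt)| ≤ K * dt := by
  have h := norm_sub_taylorWithinEval_le (n := 0)
    ((hu.contDiffOn_time x hx).of_le (by norm_num))
    (fun s hs => (hu.bound x hx s hs).2 1 (by norm_num)) ht' ht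
  simpa [abs_of_nonneg hdt] using h

theorem abs_sub_add_mul_derivWithin_le (hu : IsSmoothSolution T K u) (ht : t ∈ Set.Icc 0 T)
    (ht' : t + dt ∈ Set.Icc 0 T) (hx : x ∈ Set.Icc 0 1) :
    |u x t - u x (t + dt) + dt * derivWithin (fun s => u x s) (Set.Icc 0 T) (t + dt)| ≤
      K * dt ^ 2 := by
  have h := norm_sub_taylorWithinEval_le (n := 1)
    ((hu.contDiffOn_time x hx).of_le (by norm_num))
    (fun s hs => (hu.bound x hx s hs).2 2 le_rfl) ht' ht
  simpa [taylorWithinEval_succ, iteratedDerivWithin_one, sub_add_eq_sub_sub] using h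

theorem abs_gridx_mul_stepMat_self_sub_le (hu : IsSmoothSolution T K u) (ht : t ∈ Set.Icc 0 T)
    (hdt : 0 < dt) (ht' : t + dt ∈ Set.Icc 0 T) (i : Fin N) :
    |gridx N i * ((stepMat N dt (fun j => u (gridx N j) (t + dt)) *ᵥ
      fun j => u (gridx N j) (t + dt)) i - u (gridx N i) t)| ≤ dt * (K * (dt + hmesh N ^ 2)) := by
  have hx := gridx_pos N i
  have hxI := gridx_mem_Icc N i
  have hspace := abs_gridx_mul_matC_mulVec_add_le (N := N) (hu.boundary _ ht').1
    (hu.boundary _ ht').2 (hu.contDiffOn_space _ ht')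
    (fun y hy => (hu.bound y hy _ ht').1 3 (by norm_num))
    (fun y hy => (hu.bound y hy _ ht').1 4 le_rfl) i
  have htime := hu.abs_sub_add_mul_derivWithin_le ht ht' hxI
  have heq := hu.equation _ ⟨hx, hxI.2⟩ _ ⟨add_pos_of_nonneg_of_pos ht.1 hdt, ht'.2⟩
  rw [stepMat_mulVec_apply, gfun_mul_self, div_div]
  set δ := u (gridx N i) t - u (gridx N i) (t + dt)
    + dt * derivWithin (fun s => u (gridx N i) s) (Set.Icc 0 T) (t + dt) with hδ
  set σ := gridx N i * ((matC N *ᵥ fun j => u (gridx N j) (t + dt)) i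
    + iteratedDerivWithin 2 (fun y => u y (t + dt)) (Set.Icc 0 1) (gridx N i)
    + 1 / gridx N i * derivWithin (fun y => u y (t + dt)) (Set.Icc 0 1) (gridx N i)) with hσ
  calc _ = |-(gridx N i * δ) + dt * σ| := by
        congr 1
        rw [hδ, hσ, heq]
        ring
    _ ≤ gridx N i * |δ| + dt * |σ| := by
        refine (abs_add_le _ _).trans_eq ?_
        rw [abs_neg, abs_mul, abs_mul, abs_of_pos hx, abs_of_pos hdt]
    _ ≤ 1 * (K * dt ^ 2) + dt * (K * hmesh N ^ 2) := by
        have := hxI.2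
        gcongr
    _ = dt * (K * (dt + hmesh N ^ 2)) := by ring

theorem abs_gridx_mul_stepMat_sub_le (hu : IsSmoothSolution T K u) (ht : t ∈ Set.Icc 0 T)
    (hdt : 0 < dt) (ht' : t + dt ∈ Set.Icc 0 T) (v : Fin N → ℝ) (i : Fin N) :
    |gridx N i * ((stepMat N dt v *ᵥ fun j => u (gridx N j) (t + dt)) i - u (gridx N i) t)| ≤
      dt * (2 * K * |u (gridx N i) t - v i| + (K + 2 * K ^ 2) * (dt + hmesh N ^ 2)) := by
  have hx := gridx_pos N i
  have hK := hu.bound_nonneg ht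
  have himplicit := hu.abs_gridx_mul_stepMat_self_sub_le (N := N) ht hdt ht' i
  have hlag : |gfun (v i) - gfun (u (gridx N i) (t + dt))| ≤
      2 * (|u (gridx N i) t - v i| + K * dt) := by
    refine (abs_gfun_sub_gfun_le _ _).trans ?_
    have := (_root_.abs_sub_le (v i) (u (gridx N i) t) (u (gridx N i) (t + dt))).trans
      (add_le_add (abs_sub_comm _ _).le (hu.abs_sub_le ht hdt.le ht' (gridx_mem_Icc N i)))
    linarith
  have hreaction : |(gfun (v i) - gfun (u (gridx N i) (t + dt)))
      * (u (gridx N i) (t + dt) / gridx N i)| ≤ 2 * (|u (gridx N i) t - v i| + K * dt) * K := by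
    rw [abs_mul]
    exact mul_le_mul hlag (hu.abs_div_le ht' ⟨hx, (gridx_mem_Icc N i).2⟩) (abs_nonneg _)
      (by positivity)
  have hsplit : gridx N i * ((stepMat N dt v *ᵥ fun j => u (gridx N j) (t + dt)) i
        - u (gridx N i) t) =
      gridx N i * ((stepMat N dt (fun j => u (gridx N j) (t + dt)) *ᵥ
        fun j => u (gridx N j) (t + dt)) i - u (gridx N i) t)
      + dt * ((gfun (v i) - gfun (u (gridx N i) (t + dt)))
        * (u (gridx N i) (t + dt) / gridx N i)) := by
    rw [stepMat_mulVec_apply, stepMat_mulVec_apply]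
    field_simp
    ring
  rw [hsplit]
  refine (abs_add_le _ _).trans ?_
  rw [abs_mul dt, abs_of_pos hdt]
  have hmesh_term : 0 ≤ dt * (2 * K ^ 2 * hmesh N ^ 2) := by positivity
  linear_combination himplicit + dt * hreaction + hmesh_term

theorem normDh_error_succ_sq_le (hu : IsSmoothSolution T K u) (ht : t ∈ Set.Icc 0 T)
    (hdt : 0 < dt) (ht' : t + dt ∈ Set.Icc 0 T) {a : ℝ} (ha : 0 < a) {v v' : Fin N → ℝ}
    (hv : ∀ i, a ≤ gfun (v i)) (hstep : stepMat N dt v *ᵥ v' = v) :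
    normDh N (fun i => u (gridx N i) (t + dt) - v' i) ^ 2 ≤
      (1 + dt * ((2 * K) ^ 2 / a)) * normDh N (fun i => u (gridx N i) t - v i) ^ 2
        + dt * (((K + 2 * K ^ 2) * (dt + hmesh N ^ 2)) ^ 2 / a) := by
  set r : Fin N → ℝ := fun i =>
    gridx N i * ((stepMat N dt v *ᵥ fun j => u (gridx N j) (t + dt)) i - u (gridx N i) t) / dt
    with hr_def
  have hr : ∀ i, |r i| ≤
      2 * K * |u (gridx N i) t - v i| + (K + 2 * K ^ 2) * (dt + hmesh N ^ 2) := fun i => by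
    rw [hr_def, abs_div, abs_of_pos hdt, div_le_iff₀' hdt]
    exact hu.abs_gridx_mul_stepMat_sub_le ht hdt ht' v i
  have herror : ∀ i, (stepMat N dt v *ᵥ fun j => u (gridx N j) (t + dt) - v' j) i =
      u (gridx N i) t - v i + dt * (r i / gridx N i) := fun i => by
    have hx := gridx_pos N i
    change (stepMat N dt v *ᵥ ((fun j => u (gridx N j) (t + dt)) - v')) i = _
    rw [Matrix.mulVec_sub, hstep, Pi.sub_apply, hr_def]
    field_simp
    ring
  have henergy := normDh_sq_le_of_stepMat_mulVec_eq hdt.le ha hv herror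
  have hresidual := mul_le_mul_of_nonneg_left (normDh_sq_le_of_abs_le hr)
    (by positivity : 0 ≤ dt / (2 * a))
  refine (henergy.trans (add_le_add_right hresidual _)).trans_eq ?_
  field_simp
  ring

theorem normDh_error_le (hu : IsSmoothSolution T K u) (hT : 0 < T) {c : ℝ} (hc0 : 0 ≤ c)
    (hc : c < π / 2) (hinit : ∀ x ∈ Set.Icc (0 : ℝ) 1, |u x 0| ≤ c) (hM : 1 ≤ M)
    {v : ℕ → Fin N → ℝ} (hv0 : v 0 = fun i => u (gridx N i) 0)
    (hv : ∀ n, stepMat N (T / M) (v n) *ᵥ v (n + 1) = v n) (hn : n ≤ M) :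
    normDh N (fun i => u (gridx N i) (n * (T / M)) - v n i) ≤
      √(T * exp (T * ((2 * K) ^ 2 / sinc (2 * c))) / sinc (2 * c)) * (K + 2 * K ^ 2)
        * (T / M + hmesh N ^ 2) := by
  have hdt : 0 < T / M := by positivity
  have htime : ∀ k ≤ M, (k : ℝ) * (T / M) ∈ Set.Icc 0 T := fun k hk =>
    natCast_mul_div_mem_Icc hT.le hk
  have hK := hu.bound_nonneg ⟨le_rfl, hT.le⟩
  have ha := sinc_two_mul_pos hc0 hc
  have hbound := abs_le_of_forall_stepMat_mulVec_eq hdt.le hc.le ha.le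
    (fun i => hv0 ▸ hinit _ (gridx_mem_Icc N i)) hv
  have hg : ∀ k i, sinc (2 * c) ≤ gfun (v k i) := fun k i =>
    sinc_le_gfun_of_abs_le hc.le (hbound k i)
  set a := sinc (2 * c)
  set S := (K + 2 * K ^ 2) * (T / M + hmesh N ^ 2) with hS
  have hgronwall := le_add_mul_exp_of_step_le
    (y := fun k => normDh N (fun i => u (gridx N i) (k * (T / M)) - v k i) ^ 2)
    (q := T / M * ((2 * K) ^ 2 / a)) (b := T / M * (S ^ 2 / a)) (n := n)
    (fun _ => sq_nonneg _) (by positivity) (by positivity) fun k hk => by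
      have hsucc : ((k + 1 : ℕ) : ℝ) * (T / M) = k * (T / M) + T / M := by push_cast; ring
      have ht' := htime (k + 1) (by omega)
      rw [hsucc] at ht' ⊢
      exact hu.normDh_error_succ_sq_le (htime k (by omega)) hdt ht' ha (hg k) (hv k)
  have hzero : normDh N (fun i => u (gridx N i) ((0 : ℕ) * (T / M)) - v 0 i) ^ 2 = 0 := by
    simp [normDh, hv0]
  rw [hzero, zero_add, ← mul_assoc, ← mul_assoc] at hgronwall
  have hTn := (htime n hn).2
  rw [mul_assoc, ← hS]
  refine le_of_abs_le (abs_le_of_sq_le_sq ?_ (by positivity))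
  rw [mul_pow, sq_sqrt (by positivity)]
  calc _ ≤ n * (T / M) * (S ^ 2 / a) * exp (n * (T / M) * ((2 * K) ^ 2 / a)) := hgronwall
    _ ≤ T * (S ^ 2 / a) * exp (T * ((2 * K) ^ 2 / a)) := by gcongr
    _ = T * exp (T * ((2 * K) ^ 2 / a)) / a * S ^ 2 := by ring

end IsSmoothSolution

theorem stmt13_general {T K : ℝ} (hT : 0 < T) {u : ℝ → ℝ → ℝ} (hu : IsSmoothSolution T K u)
    (hinit : ∀ x ∈ Set.Icc (0 : ℝ) 1, |u x 0| < π / 2) :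
    ∃ c : ℝ, 0 < c ∧ ∀ N M : ℕ, 1 ≤ M → ∀ uh : ℕ → Fin N → ℝ,
      uh 0 = (fun i => u (gridx N i) 0) →
      (∀ n, stepMat N (T / M) (uh n) *ᵥ uh (n + 1) = uh n) →
      ∀ n ≤ M, normDh N (fun i => u (gridx N i) (n * (T / M)) - uh n i) ≤
        c * (T / M + hmesh N ^ 2) := by
  have hK := hu.bound_nonneg ⟨le_rfl, hT.le⟩
  obtain ⟨x₀, hx₀, hmax⟩ := isCompact_Icc.exists_isMaxOn (Set.nonempty_Icc.2 zero_le_one)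
    (hu.contDiffOn_space 0 ⟨le_rfl, hT.le⟩).continuousOn.abs
  refine ⟨√(T * exp (T * ((2 * K) ^ 2 / sinc (2 * |u x₀ 0|))) / sinc (2 * |u x₀ 0|))
    * (K + 2 * K ^ 2) + 1, by positivity, fun N M hM uh huh0 huh n hn => ?_⟩
  refine (hu.normDh_error_le hT (abs_nonneg _) (hinit x₀ hx₀) hmax hM huh0 huh hn).trans ?_
  have := hmesh_pos N
  gcongr
  exact le_add_of_nonneg_right zero_le_one

theorem lt_pi_div_two_of_sin_div_ne_zero {c : ℝ} (hc : c ≤ π / 2)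
    (h : sin (2 * c) / (2 * c) ≠ 0) : c < π / 2 :=
  hc.lt_of_ne (by rintro rfl; simp [mul_div_cancel₀] at h)

theorem add_hmesh_sq_le {N : ℕ} (hN : 1 ≤ N) {τ : ℝ} (hτ : 0 ≤ τ) :
    τ + hmesh N ^ 2 ≤ 2 * (τ + hmesh N ^ 2 * √|log (hmesh N)|) := by
  have := mul_le_mul_of_nonneg_left (one_half_le_sqrt_abs_log_hmesh hN) (sq_nonneg (hmesh N))
  linarith

/-- Discretization error bound for the semi-implicit Euler finite difference scheme
applied to the radially symmetric harmonic map heat flow equation: for a sufficiently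
smooth solution `u` with `sup_x |u(x,0)| ≤ c_α` (where `α ∈ (1/2,1)` and
`sin(2c_α)/(2c_α) = α²`, `c_α ∈ (0,π/2]`), there is a constant `c > 0` such that for all
`N, M ≥ 1` (with `h = 1/(N+1)`, `Δt = T/M`) the error `eⁿ` between the grid restriction
of `u` at time `nΔt` and the scheme iterate `uⁿ` satisfies
`‖eⁿ‖_{D,h} ≤ c(Δt + h²|ln h|^{1/2})` for `1 ≤ n ≤ M`. -/
theorem stmt13 (T : ℝ) (hT : 0 < T) (α : ℝ) (hα : α ∈ Set.Ioo (1 / 2 : ℝ) 1)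
    (cα : ℝ) (hcα : cα ∈ Set.Ioc (0 : ℝ) (π / 2))
    (hceq : Real.sin (2 * cα) / (2 * cα) = α ^ 2)
    (u : ℝ → ℝ → ℝ)
    (hbc : ∀ t ∈ Set.Icc (0 : ℝ) T, u 0 t = 0 ∧ u 1 t = 0)
    (hsmx : ∀ t ∈ Set.Icc (0 : ℝ) T, ContDiffOn ℝ 4 (fun x => u x t) (Set.Icc 0 1))
    (hsmt : ∀ x ∈ Set.Icc (0 : ℝ) 1, ContDiffOn ℝ 2 (fun t => u x t) (Set.Icc 0 T))
    (hbdd : ∃ K : ℝ, ∀ x ∈ Set.Icc (0 : ℝ) 1, ∀ t ∈ Set.Icc (0 : ℝ) T,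
      (∀ j ≤ 4, |iteratedDerivWithin j (fun x' => u x' t) (Set.Icc 0 1) x| ≤ K) ∧
      (∀ j ≤ 2, |iteratedDerivWithin j (fun t' => u x t') (Set.Icc 0 T) t| ≤ K))
    (hpde : ∀ x ∈ Set.Ioc (0 : ℝ) 1, ∀ t ∈ Set.Ioc (0 : ℝ) T,
      derivWithin (fun t' => u x t') (Set.Icc 0 T) t =
        iteratedDerivWithin 2 (fun x' => u x' t) (Set.Icc 0 1) x
          + (1 / x) * derivWithin (fun x' => u x' t) (Set.Icc 0 1) x
          - Real.sin (2 * u x t) / (2 * x ^ 2))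
    (hinit : ∀ x ∈ Set.Icc (0 : ℝ) 1, |u x 0| ≤ cα) :
    ∃ c : ℝ, 0 < c ∧ ∀ N : ℕ, 1 ≤ N → ∀ M : ℕ, 1 ≤ M →
      ∀ uh : ℕ → Fin N → ℝ,
        uh 0 = (fun i => u (gridx N i) 0) →
        (∀ n, (stepMat N (T / M) (uh n)).mulVec (uh (n + 1)) = uh n) →
        ∀ n : ℕ, 1 ≤ n → n ≤ M →
          normDh N (fun i => u (gridx N i) (n * (T / M)) - uh n i) ≤
            c * (T / M + hmesh N ^ 2 * Real.sqrt |Real.log (hmesh N)|) := by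
  obtain ⟨K, hK⟩ := hbdd
  have hc : cα < π / 2 := lt_pi_div_two_of_sin_div_ne_zero hcα.2
    (hceq ▸ pow_ne_zero 2 (by linarith [hα.1]))
  obtain ⟨c, hc0, h⟩ := stmt13_general hT ⟨hbc, hsmx, hsmt, hK, hpde⟩
    fun x hx => (hinit x hx).trans_lt hc
  refine ⟨c * 2, by positivity, fun N hN M hM uh huh0 huh n _ hn => ?_⟩
  rw [mul_assoc]
  exact (h N M hM uh huh0 huh n hn).trans
    (mul_le_mul_of_nonneg_left (add_hmesh_sq_le hN (by positivity)) hc0.le)
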